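/- Let g be a post-Lie algebra over a field of characteristic zero with post-symmetric brace operations {T_n}, regarded as a single operation T(X; y) on finite lists X of elements of g (with T((); y) = y). Then for every list X = (x_1, …, x_n) of elements of g and all u, v ∈ g: T(X; [u, v]) = Σ_{S ⊆ {1, …, n}} [ T(X_S; u), T(X_{S^c}; v) ], where the sum ranges over all subsets S of {1, …, n}, S^c is the complement of S, and X_S denotes the sublist of X consisting of the entries x_j with j ∈ S taken in increasing order of j (with X_∅ the empty list). -/

import Mathlib

/-- The post-symmetric brace operations of a post-Lie algebra, as a single operation on
lists: `brace t [] y = y`, `brace t [x] y = t x y`, and for `n ≥ 2`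
`brace t (x :: X) y = t x (brace t X y) - ∑ₖ brace t (X with xₖ replaced by t x xₖ) y`. -/
def brace {K : Type*} [Field K] {g : Type*} [AddCommGroup g] [Module K g]
    (t : g →ₗ[K] g →ₗ[K] g) : List g → g → g
  | [], y => y
  | x :: X, y =>
      t x (brace t X y) -
        ∑ k ∈ Finset.range X.length, brace t (X.set k (t x (X.getD k 0))) y
  termination_by l _ => l.length
  decreasing_by
    all_goals (simp only [List.length_set, List.length_cons]; omega)

/-!
The operation `T(x :: X; ·)` is `T(x; ·) ∘ T(X; ·)` minus a sum of `T`'s over the lists got from `X`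
by applying `t x` to one entry. By induction on the length, the formula holds for `X` and for all
these lists. Since `t x` derives the bracket, applying it to `[T(X_S; u), T(X_Sᶜ; v)]` gives
`[T(x :: X_S; u), T(X_Sᶜ; v)] + [T(X_S; u), T(x :: X_Sᶜ; v)]` plus the terms in which `t x` has
acted on one entry of `X_S` or of `X_Sᶜ`. Acting on an entry commutes with unshuffling, so these
terms cancel against the subtracted sum, while the first two are exactly the summands for `x :: X`,
according to whether the subset contains the position of `x`.
-/

section UnshuffleSum

variable {α M : Type*} [AddCommMonoid M]

/-- The sublist `X_S` of `X`: the entries whose positions lie in `S`, in increasing order of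
position. -/
def subword (X : List α) (S : Finset (Fin X.length)) : List α :=
  ((List.finRange X.length).filter (· ∈ S)).map X.get

/-- The value of `φ` on the unshuffle coproduct `∑_S X_S ⊗ X_{Sᶜ}` of the word `X`. -/
def unshuffleSum (φ : List α → List α → M) (X : List α) : M :=
  ∑ S : Finset (Fin X.length), φ (subword X S) (subword X Sᶜ)

/-- The sum of `ψ` over the lists got from `X` by applying `d` to one entry: for multilinear `ψ` and
linear `d`, the value of `ψ` on the image of the word `X` under the derivation of the tensor algebra
that extends `d`. The default value `0` of `getD` is never read. -/
def leibnizSum [Zero α] (d : α → α) (ψ : List α → M) (X : List α) : M :=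
  ∑ k ∈ Finset.range X.length, ψ (X.set k (d (X.getD k 0)))

theorem subword_cons_image_succ (x : α) (X : List α) (S : Finset (Fin X.length)) :
    subword (x :: X) (S.image Fin.succ) = subword X S := by
  simp [subword, List.finRange_succ, List.filter_map, Function.comp_def]

theorem subword_cons_insert_zero (x : α) (X : List α) (S : Finset (Fin X.length)) :
    subword (x :: X) (insert 0 (S.image Fin.succ)) = x :: subword X S := by
  simp [subword, List.finRange_succ, List.filter_map, Function.comp_def]

theorem compl_image_succ {n : ℕ} (S : Finset (Fin n)) :
    (S.image Fin.succ)ᶜ = insert 0 (Sᶜ.image Fin.succ) := by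
  ext i
  cases i using Fin.cases <;> simp

theorem compl_insert_zero_image_succ {n : ℕ} (S : Finset (Fin n)) :
    (insert 0 (S.image Fin.succ))ᶜ = Sᶜ.image Fin.succ := by
  rw [compl_eq_comm, compl_image_succ, compl_compl]

theorem sum_finset_fin_succ {n : ℕ} (f : Finset (Fin (n + 1)) → M) :
    ∑ S, f S = ∑ S : Finset (Fin n), f (insert 0 (S.image Fin.succ)) +
      ∑ S : Finset (Fin n), f (S.image Fin.succ) := by
  have image_injective := Finset.image_injective (Fin.succ_injective n)
  rw [← Finset.powerset_univ, Fin.univ_succ, Finset.cons_eq_insert, Finset.map_eq_image,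
    Function.Embedding.coeFn_mk, Finset.sum_powerset_insert (by simp), Finset.powerset_image,
    Finset.sum_image image_injective.injOn, Finset.sum_image image_injective.injOn,
    Finset.powerset_univ, add_comm]

theorem unshuffleSum_nil (φ : List α → List α → M) : unshuffleSum φ [] = φ [] [] := by
  simp [unshuffleSum, subword]

theorem unshuffleSum_cons (φ : List α → List α → M) (x : α) (X : List α) :
    unshuffleSum φ (x :: X) =
      unshuffleSum (fun A B => φ (x :: A) B + φ A (x :: B)) X := by
  have head_left (S : Finset (Fin X.length)) :
      φ (subword (x :: X) (insert 0 (S.image Fin.succ)))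
        (subword (x :: X) (insert 0 (S.image Fin.succ))ᶜ) =
      φ (x :: subword X S) (subword X Sᶜ) :=
    congrArg₂ φ (subword_cons_insert_zero x X S)
      ((congrArg _ (compl_insert_zero_image_succ S)).trans (subword_cons_image_succ x X Sᶜ))
  have head_right (S : Finset (Fin X.length)) :
      φ (subword (x :: X) (S.image Fin.succ)) (subword (x :: X) (S.image Fin.succ)ᶜ) =
      φ (subword X S) (x :: subword X Sᶜ) :=
    congrArg₂ φ (subword_cons_image_succ x X S)
      ((congrArg _ (compl_image_succ S)).trans (subword_cons_insert_zero x X Sᶜ))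
  simp only [unshuffleSum, Finset.sum_add_distrib, ← head_left, ← head_right]
  exact sum_finset_fin_succ _

theorem map_unshuffleSum {N : Type*} [AddCommMonoid N] (f : M →+ N) (φ : List α → List α → M)
    (X : List α) : f (unshuffleSum φ X) = unshuffleSum (fun A B => f (φ A B)) X :=
  map_sum f _ _

theorem unshuffleSum_add (φ χ : List α → List α → M) (X : List α) :
    unshuffleSum (fun A B => φ A B + χ A B) X = unshuffleSum φ X + unshuffleSum χ X :=
  Finset.sum_add_distrib

theorem unshuffleSum_sub {M : Type*} [AddCommGroup M] (φ χ : List α → List α → M) (X : List α) :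
    unshuffleSum (fun A B => φ A B - χ A B) X = unshuffleSum φ X - unshuffleSum χ X :=
  Finset.sum_sub_distrib _ _

variable [Zero α]

theorem leibnizSum_nil (d : α → α) (ψ : List α → M) : leibnizSum d ψ [] = 0 := rfl

theorem leibnizSum_cons (d : α → α) (ψ : List α → M) (x : α) (X : List α) :
    leibnizSum d ψ (x :: X) = ψ (d x :: X) + leibnizSum d (fun Y => ψ (x :: Y)) X := by
  simp [leibnizSum, Finset.sum_range_succ', add_comm]

theorem leibnizSum_add (d : α → α) (ψ χ : List α → M) (X : List α) :
    leibnizSum d (fun Y => ψ Y + χ Y) X = leibnizSum d ψ X + leibnizSum d χ X :=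
  Finset.sum_add_distrib

theorem map_leibnizSum {N : Type*} [AddCommMonoid N] (f : M →+ N) (d : α → α) (ψ : List α → M)
    (X : List α) : f (leibnizSum d ψ X) = leibnizSum d (fun Y => f (ψ Y)) X :=
  map_sum f _ _

-- The derivation of the tensor algebra that extends `d` is a coderivation for unshuffling.
theorem leibnizSum_unshuffleSum (d : α → α) (φ : List α → List α → M) (X : List α) :
    leibnizSum d (unshuffleSum φ) X =
      unshuffleSum (fun A B => leibnizSum d (φ · B) A + leibnizSum d (φ A) B) X := by
  induction X generalizing φ with
  | nil => simp [unshuffleSum_nil, leibnizSum_nil]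
  | cons x X ih =>
    calc leibnizSum d (unshuffleSum φ) (x :: X)
      _ = unshuffleSum φ (d x :: X) +
            leibnizSum d (unshuffleSum fun A B => φ (x :: A) B + φ A (x :: B)) X := by
        rw [leibnizSum_cons, funext (unshuffleSum_cons φ x)]
      _ = unshuffleSum (fun A B => leibnizSum d (φ · B) A + leibnizSum d (φ A) B) (x :: X) := by
        rw [ih, unshuffleSum_cons, unshuffleSum_cons, ← unshuffleSum_add]
        simp only [leibnizSum_cons, leibnizSum_add]
        congr! 3
        abel

end UnshuffleSum

section Brace

variable {K : Type*} [Field K] {g : Type*} [AddCommGroup g] [Module K g] (t : g →ₗ[K] g →ₗ[K] g)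

theorem brace_nil (y : g) : brace t [] y = y := by
  rw [brace]

theorem brace_cons (x : g) (X : List g) (y : g) :
    brace t (x :: X) y = t x (brace t X y) - leibnizSum (t x) (brace t · y) X := by
  rw [brace, leibnizSum]

variable {t} {β : g →ₗ[K] g →ₗ[K] g}

theorem brace_cons_add_brace_cons {x : g}
    (hβ : ∀ y z, t x (β y z) = β (t x y) z + β y (t x z)) (A B : List g) (u v : g) :
    β (brace t (x :: A) u) (brace t B v) + β (brace t A u) (brace t (x :: B) v) =
      t x (β (brace t A u) (brace t B v)) -
        (leibnizSum (t x) (fun A' => β (brace t A' u) (brace t B v)) A +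
          leibnizSum (t x) (fun B' => β (brace t A u) (brace t B' v)) B) := by
  have left_sum := map_leibnizSum (β.flip (brace t B v)).toAddMonoidHom (t x) (brace t · u) A
  have right_sum := map_leibnizSum (β (brace t A u)).toAddMonoidHom (t x) (brace t · v) B
  simp only [LinearMap.toAddMonoidHom_coe, LinearMap.flip_apply] at left_sum right_sum
  rw [brace_cons, brace_cons, map_sub, map_sub, LinearMap.sub_apply, left_sum, right_sum, hβ]
  abel

theorem brace_bracket_general (hβ : ∀ x y z, t x (β y z) = β (t x y) z + β y (t x z))
    (X : List g) (u v : g) :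
    brace t X (β u v) = ∑ S, β (brace t (subword X S) u) (brace t (subword X Sᶜ) v) := by
  let φ (A B : List g) : g := β (brace t A u) (brace t B v)
  change brace t X (β u v) = unshuffleSum φ X
  induction hn : X.length generalizing X with
  | zero => simp [φ, List.length_eq_zero_iff.mp hn, unshuffleSum_nil, brace_nil]
  | succ n ih =>
    obtain ⟨x, X, rfl⟩ := List.exists_cons_of_length_eq_add_one hn
    have length_X : X.length = n := Nat.succ.inj hn
    have ih_set : leibnizSum (t x) (brace t · (β u v)) X = leibnizSum (t x) (unshuffleSum φ) X :=
      Finset.sum_congr rfl fun k _ => ih _ (by rw [List.length_set, length_X])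
    calc brace t (x :: X) (β u v)
      _ = t x (unshuffleSum φ X) - leibnizSum (t x) (unshuffleSum φ) X := by
        rw [brace_cons, ih X length_X, ih_set]
      _ = unshuffleSum (fun A B => t x (φ A B) -
            (leibnizSum (t x) (φ · B) A + leibnizSum (t x) (φ A) B)) X := by
        rw [unshuffleSum_sub, leibnizSum_unshuffleSum]
        exact congrArg (· - _) (map_unshuffleSum (t x).toAddMonoidHom φ X)
      _ = unshuffleSum (fun A B => φ (x :: A) B + φ A (x :: B)) X := by
        simp only [φ, brace_cons_add_brace_cons (hβ x)]
      _ = unshuffleSum φ (x :: X) := (unshuffleSum_cons φ x X).symm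

end Brace

/-- The compatibility of the post-symmetric braces with the Lie bracket:
`T(X; [u,v]) = Σ_{S ⊆ {1,…,n}} [T(X_S; u), T(X_{Sᶜ}; v)]`. -/
theorem brace_bracket {K : Type*} [Field K] [CharZero K]
    {g : Type*} [LieRing g] [LieAlgebra K g] (t : g →ₗ[K] g →ₗ[K] g)
    (h1 : ∀ z x y : g, t z ⁅x, y⁆ = ⁅t z x, y⁆ + ⁅x, t z y⁆)
    (h2 : ∀ x y z : g, t ⁅x, y⁆ z =
      (t x (t y z) - t (t x y) z) - (t y (t x z) - t (t y x) z))
    (X : List g) (u v : g) :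
    brace t X ⁅u, v⁆ =
      ∑ S : Finset (Fin X.length),
        ⁅brace t (((List.finRange X.length).filter (fun j => j ∈ S)).map X.get) u,
          brace t (((List.finRange X.length).filter (fun j => j ∈ Sᶜ)).map X.get) v⁆ := by
  exact brace_bracket_general (β := (LieAlgebra.ad K g : g →ₗ[K] Module.End K g)) h1 X u v
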